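/- arXiv:1407.0612 — 2 statements merged into one kernel-verified Lean document; each statement's English description precedes it below -/
import Mathlib

section
/- There exists a constant C > 0 such that for every k ≥ 1 and all functions m₁, m₂ : Fin k → ℕ with M₁ = Σⱼ m₁ⱼ ≥ 1 and M₂ = Σⱼ m₂ⱼ ≥ 1, setting mγⱼ = m₁ⱼ + m₂ⱼ, Mγ = M₁ + M₂, p₁(j) = m₁ⱼ/M₁, p₂(j) = m₂ⱼ/M₂, pγ(j) = mγⱼ/Mγ, and Δℓ = (log Mγ! − log M₁! − log M₂!) − Σⱼ (log mγⱼ! − log m₁ⱼ! − log m₂ⱼ!), one has |Δℓ − (M₁·D(p₁‖pγ) + M₂·D(p₂‖pγ))| ≤ C·(k+1)·(log Mγ + 1). -/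
open Finset

/-- Kullback-Leibler divergence between two probability vectors on `Fin k`,
with the convention `0 · log (0 / x) = 0` (automatic since `0 * log _ = 0`). -/
noncomputable def klDiv {k : ℕ} (p q : Fin k → ℝ) : ℝ :=
  ∑ j, p j * Real.log (p j / q j)

/-!
For `f : ℕ → ℝ`, let `Δ f` be how much the merge changes the sum over clusters of
`f (∑ⱼ mⱼ) - ∑ⱼ f (mⱼ)`. Then `Δ f` is linear in `f`, vanishes for `f n = n`, and for
`f n = n log n` equals `M₁ D(p₁‖pγ) + M₂ D(p₂‖pγ)` exactly. Since `Δℓ` is `Δ f` for `f n = log n!`,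
the error is `Δ r` with `r n = log n! - (n log n - n)`. By Stirling `0 ≤ r n ≤ (log n) / 2 + 1`, so
each of the `k + 1` brackets `r (a + b) - r a - r b` in `Δ r` is at most `log Mγ + 2` in absolute
value.
-/

section MergeVariation

variable {ι : Type*} [Fintype ι]

/-- The variation of the criterion `f (∑ j, m j) - ∑ j, f (m j)`, summed over clusters, when the
clusters with counts `m₁` and `m₂` are merged: new value minus old. The likelihood variation
`Δℓ` is the case `f n = log n!`. -/
noncomputable def mergeVariation (f : ℕ → ℝ) (m₁ m₂ : ι → ℕ) : ℝ :=
  (f (∑ j, (m₁ j + m₂ j)) - f (∑ j, m₁ j) - f (∑ j, m₂ j))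
    - ∑ j, (f (m₁ j + m₂ j) - f (m₁ j) - f (m₂ j))

lemma mergeVariation_sub (f g : ℕ → ℝ) (m₁ m₂ : ι → ℕ) :
    mergeVariation (fun n => f n - g n) m₁ m₂
      = mergeVariation f m₁ m₂ - mergeVariation g m₁ m₂ := by
  simp only [mergeVariation, sum_sub_distrib]
  ring

lemma mergeVariation_natCast (m₁ m₂ : ι → ℕ) : mergeVariation (fun n => (n : ℝ)) m₁ m₂ = 0 := by
  simp [mergeVariation, sum_add_distrib]

lemma abs_mergeVariation_le {f : ℕ → ℝ} {m₁ m₂ : ι → ℕ} {B : ℝ}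
    (hf : ∀ a b, a + b ≤ ∑ j, (m₁ j + m₂ j) → |f (a + b) - f a - f b| ≤ B) :
    |mergeVariation f m₁ m₂| ≤ (Fintype.card ι + 1) * B := by
  have htotal : |f (∑ j, (m₁ j + m₂ j)) - f (∑ j, m₁ j) - f (∑ j, m₂ j)| ≤ B := by
    rw [sum_add_distrib]
    exact hf _ _ sum_add_distrib.ge
  have hcells : |∑ j, (f (m₁ j + m₂ j) - f (m₁ j) - f (m₂ j))| ≤ Fintype.card ι * B :=
    calc |∑ j, (f (m₁ j + m₂ j) - f (m₁ j) - f (m₂ j))|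
        ≤ ∑ j, |f (m₁ j + m₂ j) - f (m₁ j) - f (m₂ j)| := abs_sum_le_sum_abs _ _
      _ ≤ ∑ _j : ι, B := sum_le_sum fun j _ =>
          hf _ _ (single_le_sum_of_canonicallyOrdered (f := fun j => m₁ j + m₂ j) (mem_univ j))
      _ = Fintype.card ι * B := by simp
  calc |mergeVariation f m₁ m₂| ≤ B + Fintype.card ι * B :=
        (abs_sub _ _).trans (add_le_add htotal hcells)
    _ = (Fintype.card ι + 1) * B := by ring

end MergeVariation

section KLDiv

variable {k : ℕ}

lemma mul_klDiv_div_div {a c : Fin k → ℝ} (hac : ∀ j, c j = 0 → a j = 0) {A N : ℝ}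
    (hA : A ≠ 0) (hN : N ≠ 0) :
    A * klDiv (fun j => a j / A) (fun j => c j / N)
      = ∑ j, a j * (Real.log (a j) - Real.log (c j))
        - (∑ j, a j) * (Real.log A - Real.log N) := by
  rw [klDiv, mul_sum, sum_mul, ← sum_sub_distrib]
  refine sum_congr rfl fun j _ => ?_
  rcases eq_or_ne (a j) 0 with ha | ha
  · simp [ha]
  have hc : c j ≠ 0 := mt (hac j) ha
  rw [Real.log_div (div_ne_zero ha hA) (div_ne_zero hc hN), Real.log_div ha hA,
    Real.log_div hc hN]
  field_simp
  ring

/-- The empirical distribution of a cluster with counts `m`: the paper's `p₁`, `p₂` and `pγ`. It is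
`0` when all counts vanish. -/
noncomputable def empiricalDist (m : Fin k → ℕ) : Fin k → ℝ :=
  fun j => (m j : ℝ) / ((∑ i, m i : ℕ) : ℝ)

lemma mergeVariation_mul_log {m₁ m₂ : Fin k → ℕ} (h₁ : ∑ j, m₁ j ≠ 0) (h₂ : ∑ j, m₂ j ≠ 0) :
    mergeVariation (fun n => n * Real.log n) m₁ m₂
      = ((∑ j, m₁ j : ℕ) : ℝ)
          * klDiv (empiricalDist m₁) (empiricalDist fun j => m₁ j + m₂ j)
        + ((∑ j, m₂ j : ℕ) : ℝ)
          * klDiv (empiricalDist m₂) (empiricalDist fun j => m₁ j + m₂ j) := by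
  have hN : ((∑ j, (m₁ j + m₂ j) : ℕ) : ℝ) ≠ 0 := by
    rw [sum_add_distrib]
    exact_mod_cast fun h => h₁ (Nat.eq_zero_of_add_eq_zero_right h)
  have hsupp₁ : ∀ j, ((m₁ j + m₂ j : ℕ) : ℝ) = 0 → (m₁ j : ℝ) = 0 := fun j h => by
    exact_mod_cast Nat.eq_zero_of_add_eq_zero_right (Nat.cast_eq_zero.1 h)
  have hsupp₂ : ∀ j, ((m₁ j + m₂ j : ℕ) : ℝ) = 0 → (m₂ j : ℝ) = 0 := fun j h => by
    exact_mod_cast Nat.eq_zero_of_add_eq_zero_left (Nat.cast_eq_zero.1 h)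
  unfold empiricalDist
  rw [mul_klDiv_div_div hsupp₁ (Nat.cast_ne_zero.2 h₁) hN,
    mul_klDiv_div_div hsupp₂ (Nat.cast_ne_zero.2 h₂) hN]
  simp only [mergeVariation, Nat.cast_sum, Nat.cast_add, sum_add_distrib, sum_sub_distrib, mul_sub,
    add_mul]
  ring

end KLDiv

section StirlingRem

/-- The remainder in the leading-order Stirling approximation `log n! ≈ n log n - n`. At `n = 0` it
vanishes, as `Real.log 0 = 0`. -/
noncomputable def stirlingRem (n : ℕ) : ℝ :=
  Real.log n.factorial - (n * Real.log n - n)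

lemma stirlingRem_nonneg (n : ℕ) : 0 ≤ stirlingRem n := by
  rcases eq_or_ne n 0 with rfl | hn
  · simp [stirlingRem]
  have hlog : 0 ≤ Real.log n := Real.log_natCast_nonneg n
  have hpi : 0 ≤ Real.log (2 * Real.pi) := Real.log_nonneg (by linarith [Real.two_le_pi])
  have hstirling := Stirling.le_log_factorial_stirling hn
  unfold stirlingRem
  linarith

lemma stirlingRem_eq_log_stirlingSeq_add (n : ℕ) :
    stirlingRem n = Real.log (Stirling.stirlingSeq n) + Real.log (2 * n) / 2 := by
  rcases eq_or_ne n 0 with rfl | hn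
  · simp [stirlingRem]
  rw [stirlingRem, Stirling.log_stirlingSeq_formula,
    Real.log_div (Nat.cast_ne_zero.2 hn) (Real.exp_ne_zero 1), Real.log_exp]
  ring

lemma stirlingRem_le (n : ℕ) : stirlingRem n ≤ Real.log n / 2 + 1 := by
  rcases n with _ | n
  · simp [stirlingRem]
  have hanti : Real.log (Stirling.stirlingSeq (n + 1)) ≤ Real.log (Stirling.stirlingSeq 1) :=
    Stirling.log_stirlingSeq'_antitone n.zero_le
  have hone : Real.log (Stirling.stirlingSeq 1) = 1 - Real.log 2 / 2 := by
    rw [Stirling.stirlingSeq_one, Real.log_div (Real.exp_ne_zero 1) (by positivity), Real.log_exp,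
      Real.log_sqrt zero_le_two]
  rw [stirlingRem_eq_log_stirlingSeq_add,
    Real.log_mul two_ne_zero (Nat.cast_ne_zero.2 n.succ_ne_zero)]
  linarith

lemma monotone_log_natCast : Monotone fun n : ℕ => Real.log n := by
  intro m n hmn
  rcases m.eq_zero_or_pos with rfl | hm
  · simpa using Real.log_natCast_nonneg n
  · exact Real.log_le_log (Nat.cast_pos.2 hm) (Nat.cast_le.2 hmn)

lemma abs_stirlingRem_add_sub_sub_le {a b N : ℕ} (h : a + b ≤ N) :
    |stirlingRem (a + b) - stirlingRem a - stirlingRem b| ≤ Real.log N + 2 := by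
  have hle : ∀ n ≤ N, stirlingRem n ≤ Real.log N / 2 + 1 := fun n hn => by
    linarith [stirlingRem_le n, monotone_log_natCast hn]
  have hN : 0 ≤ Real.log N := Real.log_natCast_nonneg N
  rw [abs_le]
  constructor <;>
    linarith [hle (a + b) h, hle a (by omega), hle b (by omega), stirlingRem_nonneg (a + b),
      stirlingRem_nonneg a, stirlingRem_nonneg b]

end StirlingRem

lemma mergeVariation_stirlingRem {ι : Type*} [Fintype ι] (m₁ m₂ : ι → ℕ) :
    mergeVariation stirlingRem m₁ m₂
      = mergeVariation (fun n => Real.log n.factorial) m₁ m₂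
        - mergeVariation (fun n => n * Real.log n) m₁ m₂ := by
  unfold stirlingRem
  rw [mergeVariation_sub, mergeVariation_sub, mergeVariation_natCast, sub_zero]

theorem likelihood_variation_klDiv_approx :
    ∃ C : ℝ, 0 < C ∧ ∀ (k : ℕ), 1 ≤ k → ∀ m₁ m₂ : Fin k → ℕ,
      1 ≤ ∑ j, m₁ j → 1 ≤ ∑ j, m₂ j →
      |((Real.log (Nat.factorial (∑ j, (m₁ j + m₂ j)))
            - Real.log (Nat.factorial (∑ j, m₁ j))
            - Real.log (Nat.factorial (∑ j, m₂ j)))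
          - ∑ j, (Real.log (Nat.factorial (m₁ j + m₂ j))
              - Real.log (Nat.factorial (m₁ j))
              - Real.log (Nat.factorial (m₂ j))))
        - (((∑ j, m₁ j : ℕ) : ℝ) *
              klDiv (fun j => (m₁ j : ℝ) / ((∑ i, m₁ i : ℕ) : ℝ))
                (fun j => ((m₁ j + m₂ j : ℕ) : ℝ) / ((∑ i, (m₁ i + m₂ i) : ℕ) : ℝ))
            + ((∑ j, m₂ j : ℕ) : ℝ) *
              klDiv (fun j => (m₂ j : ℝ) / ((∑ i, m₂ i : ℕ) : ℝ))
                (fun j => ((m₁ j + m₂ j : ℕ) : ℝ) / ((∑ i, (m₁ i + m₂ i) : ℕ) : ℝ)))|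
      ≤ C * ((k : ℝ) + 1) * (Real.log ((∑ j, (m₁ j + m₂ j) : ℕ) : ℝ) + 1) := by
  refine ⟨2, two_pos, fun k _ m₁ m₂ h₁ h₂ => ?_⟩
  have herror := mergeVariation_stirlingRem m₁ m₂
  rw [mergeVariation_mul_log (by omega) (by omega)] at herror
  have hbound : |mergeVariation stirlingRem m₁ m₂|
      ≤ (k + 1) * (Real.log ((∑ j, (m₁ j + m₂ j) : ℕ) : ℝ) + 2) := by
    simpa only [Fintype.card_fin] using
      abs_mergeVariation_le (m₁ := m₁) (m₂ := m₂) fun _ _ hab => abs_stirlingRem_add_sub_sub_le hab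
  have hlog : 0 ≤ Real.log ((∑ j, (m₁ j + m₂ j) : ℕ) : ℝ) := Real.log_natCast_nonneg _
  calc _ = |mergeVariation stirlingRem m₁ m₂| := congrArg _ herror.symm
    _ ≤ (k + 1) * (Real.log ((∑ j, (m₁ j + m₂ j) : ℕ) : ℝ) + 2) := hbound
    _ ≤ (k + 1) * (2 * (Real.log ((∑ j, (m₁ j + m₂ j) : ℕ) : ℝ) + 1)) := by gcongr; linarith
    _ = _ := by ring
end

section
/- Let k ≥ 1 and m₁, m₂ : Fin k → ℕ with M₁ = Σⱼ m₁ⱼ, M₂ = Σⱼ m₂ⱼ, mγⱼ = m₁ⱼ + m₂ⱼ and Mγ = M₁ + M₂. Then the likelihood variation Δℓ = (log Mγ! − log M₁! − log M₂!) − Σⱼ (log mγⱼ! − log m₁ⱼ! − log m₂ⱼ!) satisfies Δℓ = log(C(Mγ, M₁)) − Σⱼ log(C(mγⱼ, m₁ⱼ)), and Δℓ ≥ 0. -/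
/-!
Since `log C(a + b, a) = log (a + b)! - log a! - log b!`, the variation is the logarithm of
`C(M₁ + M₂, M₁)` divided by `∏ j, C(m₁ j + m₂ j, m₁ j)`. This quotient is at least `1`: choosing
`m₁ j` of the `m₁ j + m₂ j` points in every cell `j` is one way of choosing `M₁` of all the points.
-/

open Finset

theorem choose_mul_choose_le_choose_add (m n a b : ℕ) :
    m.choose a * n.choose b ≤ (m + n).choose (a + b) := by
  rw [Nat.add_choose_eq]
  exact single_le_sum (f := fun p : ℕ × ℕ => m.choose p.1 * n.choose p.2)
    (fun _ _ => Nat.zero_le _) (show (a, b) ∈ antidiagonal (a + b) from mem_antidiagonal.2 rfl)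

theorem log_add_choose (a b : ℕ) :
    Real.log ((a + b).choose a)
      = Real.log (a + b).factorial - Real.log a.factorial - Real.log b.factorial := by
  have factorial_ne_zero (n : ℕ) : (n.factorial : ℝ) ≠ 0 :=
    Nat.cast_ne_zero.2 n.factorial_ne_zero
  rw [Nat.cast_add_choose,
    Real.log_div (factorial_ne_zero _) (mul_ne_zero (factorial_ne_zero _) (factorial_ne_zero _)),
    Real.log_mul (factorial_ne_zero _) (factorial_ne_zero _), sub_sub]

section

variable {ι : Type*} (s : Finset ι)

theorem prod_choose_le_choose_sum (n a : ι → ℕ) :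
    ∏ j ∈ s, (n j).choose (a j) ≤ (∑ j ∈ s, n j).choose (∑ j ∈ s, a j) := by
  induction s using Finset.cons_induction with
  | empty => simp
  | cons i s hi ih =>
    simp only [prod_cons, sum_cons]
    calc (n i).choose (a i) * ∏ j ∈ s, (n j).choose (a j)
        ≤ (n i).choose (a i) * (∑ j ∈ s, n j).choose (∑ j ∈ s, a j) := by gcongr
      _ ≤ (n i + ∑ j ∈ s, n j).choose (a i + ∑ j ∈ s, a j) :=
        choose_mul_choose_le_choose_add _ _ _ _

theorem sum_log_choose_le_log_choose_sum {n a : ι → ℕ} (h : ∀ j ∈ s, a j ≤ n j) :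
    ∑ j ∈ s, Real.log ((n j).choose (a j))
      ≤ Real.log ((∑ j ∈ s, n j).choose (∑ j ∈ s, a j)) := by
  have choose_pos : ∀ j ∈ s, (0 : ℝ) < (n j).choose (a j) := fun j hj =>
    Nat.cast_pos.2 (Nat.choose_pos (h j hj))
  rw [← Real.log_prod fun j hj => (choose_pos j hj).ne']
  exact Real.log_le_log (prod_pos choose_pos) (mod_cast prod_choose_le_choose_sum s n a)

/-- The variation `Δℓ` of the likelihood part of the MODL clustering criterion when the clusters
with cell counts `m₁` and `m₂` are merged, the cells being indexed by `s`. -/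
noncomputable def likelihoodVariation (m₁ m₂ : ι → ℕ) : ℝ :=
  (Real.log (∑ j ∈ s, (m₁ j + m₂ j)).factorial
      - Real.log (∑ j ∈ s, m₁ j).factorial
      - Real.log (∑ j ∈ s, m₂ j).factorial)
    - ∑ j ∈ s, (Real.log (m₁ j + m₂ j).factorial
        - Real.log (m₁ j).factorial
        - Real.log (m₂ j).factorial)

theorem likelihoodVariation_eq_log_choose (m₁ m₂ : ι → ℕ) :
    likelihoodVariation s m₁ m₂
      = Real.log ((∑ j ∈ s, (m₁ j + m₂ j)).choose (∑ j ∈ s, m₁ j))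
        - ∑ j ∈ s, Real.log ((m₁ j + m₂ j).choose (m₁ j)) := by
  simp only [likelihoodVariation, sum_add_distrib, log_add_choose]

theorem likelihoodVariation_nonneg (m₁ m₂ : ι → ℕ) : 0 ≤ likelihoodVariation s m₁ m₂ := by
  rw [likelihoodVariation_eq_log_choose, sub_nonneg]
  exact sum_log_choose_le_log_choose_sum s fun _ _ => Nat.le_add_right _ _

theorem likelihood_variation_eq_log_choose_and_nonneg_general (m₁ m₂ : ι → ℕ) :
    likelihoodVariation s m₁ m₂
        = Real.log ((∑ j ∈ s, (m₁ j + m₂ j)).choose (∑ j ∈ s, m₁ j))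
          - ∑ j ∈ s, Real.log ((m₁ j + m₂ j).choose (m₁ j)) ∧
      0 ≤ likelihoodVariation s m₁ m₂ :=
  ⟨likelihoodVariation_eq_log_choose s m₁ m₂, likelihoodVariation_nonneg s m₁ m₂⟩

end

theorem likelihood_variation_eq_log_choose_and_nonneg {k : ℕ} (hk : 1 ≤ k)
    (m₁ m₂ : Fin k → ℕ) :
    ((Real.log (Nat.factorial (∑ j, (m₁ j + m₂ j)))
        - Real.log (Nat.factorial (∑ j, m₁ j))
        - Real.log (Nat.factorial (∑ j, m₂ j)))
      - ∑ j, (Real.log (Nat.factorial (m₁ j + m₂ j))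
          - Real.log (Nat.factorial (m₁ j))
          - Real.log (Nat.factorial (m₂ j)))
      = Real.log (Nat.choose (∑ j, (m₁ j + m₂ j)) (∑ j, m₁ j))
        - ∑ j, Real.log (Nat.choose (m₁ j + m₂ j) (m₁ j))) ∧
    0 ≤ (Real.log (Nat.factorial (∑ j, (m₁ j + m₂ j)))
        - Real.log (Nat.factorial (∑ j, m₁ j))
        - Real.log (Nat.factorial (∑ j, m₂ j)))
      - ∑ j, (Real.log (Nat.factorial (m₁ j + m₂ j))
          - Real.log (Nat.factorial (m₁ j))
          - Real.log (Nat.factorial (m₂ j))) := 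
  likelihood_variation_eq_log_choose_and_nonneg_general univ m₁ m₂
end
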